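/- Let ε, γ > 0 with ε ≤ 1/100 and γ ≥ 10ε, and let n and d satisfy εd ≥ 10^4·log n. Let G be a graph on at most n vertices such that d ≤ d_G(v) ≤ (1+γ)d for each vertex v ∈ V(G). Let A ⊆ V(G) be chosen by including each vertex of G independently at random with probability 1−ε. Then, with probability at least 1 − 1/n^2, G contains a subgraph G' such that A ⊆ V(G') and, for some d' with (1−2ε)d ≤ d' ≤ d, every vertex v ∈ V(G') satisfies d' ≤ d_{G'}(v) ≤ (1−ε/2)(1+γ)d'. -/

import Mathlib

/-- The probability, under the distribution of a `p`-random subset of `Fin N`, of `E`. -/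
noncomputable def bernoulliProb (N : ℕ) (p : ℝ) (E : Set (Finset (Fin N))) : ℝ :=
  ∑ S : Finset (Fin N),
    E.indicator (fun A => p ^ A.card * (1 - p) ^ (N - A.card)) S

open Finset in
noncomputable def wt {ι : Type*} [Fintype ι] [DecidableEq ι] (p : ι → ℝ) (S : Finset ι) : ℝ :=
  (∏ i ∈ S, p i) * ∏ i ∈ univ \ S, (1 - p i)

open Finset in
lemma wt_nonneg {ι : Type*} [Fintype ι] [DecidableEq ι] (p : ι → ℝ) (h0 : ∀ i, 0 ≤ p i)
    (h1 : ∀ i, p i ≤ 1) (S : Finset ι) : 0 ≤ wt p S :=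
  mul_nonneg (prod_nonneg fun i _ => h0 i) (prod_nonneg fun i _ => by linarith [h1 i])

open Finset in
lemma wt_sum {ι : Type*} [Fintype ι] [DecidableEq ι] (p : ι → ℝ) : ∑ S, wt p S = 1 := by
  have := Finset.prod_add p (fun i => 1 - p i) univ
  simp only [add_sub_cancel, prod_const_one, powerset_univ] at this
  exact this.symm

open Finset in
lemma wt_mgf {ι : Type*} [Fintype ι] [DecidableEq ι] (p : ι → ℝ) (h0 : ∀ i, 0 ≤ p i)
    (h1 : ∀ i, p i ≤ 1) (T : Finset ι) (l : ℝ) (hl : |l| ≤ 1) :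
    ∑ S, wt p S * Real.exp (l * ((S ∩ T).card : ℝ)) ≤ Real.exp ((l + l ^ 2) * ∑ i ∈ T, p i) := by
  have key := Finset.prod_add (fun i => p i * (if i ∈ T then Real.exp l else 1))
    (fun i => 1 - p i) univ
  have e1 : ∑ S, wt p S * Real.exp (l * ((S ∩ T).card : ℝ)) =
      ∏ i, (p i * (if i ∈ T then Real.exp l else 1) + (1 - p i)) := by
    rw [key, powerset_univ]
    refine sum_congr rfl fun S _ => ?_
    rw [prod_mul_distrib, prod_ite_mem, prod_const, ← Real.exp_nat_mul, wt, mul_comm l]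
    ring
  rw [e1, mul_sum, Real.exp_sum, ← prod_subset (subset_univ T)]
  · refine prod_le_prod (fun i _ => ?_) (fun i hi => ?_)
    · split_ifs
      · have := mul_nonneg (h0 i) (Real.exp_pos l).le
        linarith [h1 i]
    · rw [if_pos hi]
      have h2 := abs_le.1 (Real.abs_exp_sub_one_sub_id_le hl)
      have h3 := Real.add_one_le_exp ((l + l ^ 2) * p i)
      have h4 : p i * (Real.exp l - 1) ≤ p i * (l + l ^ 2) :=
        mul_le_mul_of_nonneg_left (by linarith [h2.2]) (h0 i)
      linarith
  · intro i _ hi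
    simp [hi]

open Finset Classical in
lemma wt_tail {ι : Type*} [Fintype ι] [DecidableEq ι] (p : ι → ℝ) (h0 : ∀ i, 0 ≤ p i)
    (h1 : ∀ i, p i ≤ 1) (T : Finset ι) (M δ : ℝ) (hδ0 : 0 ≤ δ) (hδ : δ ≤ 1)
    (hM : ∑ i ∈ T, p i ≤ M) :
    ∑ S with δ * M < |((S ∩ T).card : ℝ) - ∑ i ∈ T, p i|, wt p S ≤
      2 * Real.exp (-(δ ^ 2 * M / 4)) := by
  set μ := ∑ i ∈ T, p i with hμ
  have one : ∀ l : ℝ, |l| ≤ 1 → l ^ 2 = δ ^ 2 / 4 →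
      ∑ S, wt p S * Real.exp (l * (((S ∩ T).card : ℝ) - μ) - δ ^ 2 * M / 2)
        ≤ Real.exp (-(δ ^ 2 * M / 4)) := by
    intro l hl hl2
    have h := wt_mgf p h0 h1 T l hl
    rw [← hμ] at h
    have e : ∀ S : Finset ι, wt p S * Real.exp (l * (((S ∩ T).card : ℝ) - μ) - δ ^ 2 * M / 2)
        = (wt p S * Real.exp (l * ((S ∩ T).card : ℝ))) * Real.exp (- l * μ - δ ^ 2 * M / 2) := by
      intro S
      rw [mul_assoc, ← Real.exp_add]
      congr 2; ring
    simp_rw [e]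
    rw [← sum_mul]
    refine (mul_le_mul_of_nonneg_right h (Real.exp_pos _).le).trans ?_
    rw [← Real.exp_add, Real.exp_le_exp, hl2]
    have := mul_le_mul_of_nonneg_left hM (by positivity : 0 ≤ δ ^ 2 / 4)
    linarith
  have ha := one (δ / 2) (by rw [abs_of_nonneg] <;> linarith) (by ring)
  have hb := one (-(δ / 2)) (by rw [abs_neg, abs_of_nonneg] <;> linarith) (by ring)
  have : ∑ S with δ * M < |((S ∩ T).card : ℝ) - μ|, wt p S ≤
      ∑ S, (wt p S * Real.exp (δ / 2 * (((S ∩ T).card : ℝ) - μ) - δ ^ 2 * M / 2)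
       + wt p S * Real.exp (-(δ / 2) * (((S ∩ T).card : ℝ) - μ) - δ ^ 2 * M / 2)) := by
    rw [sum_filter]
    refine sum_le_sum fun S _ => ?_
    have hw := wt_nonneg p h0 h1 S
    split_ifs with hS
    · rw [← mul_add]
      refine le_mul_of_one_le_right hw ?_
      rcases lt_abs.1 hS with h | h
      · have : 1 ≤ Real.exp (δ / 2 * (((S ∩ T).card : ℝ) - μ) - δ ^ 2 * M / 2) := by
          rw [Real.one_le_exp_iff]
          nlinarith [mul_le_mul_of_nonneg_left h.le hδ0]
        linarith [Real.exp_pos (-(δ / 2) * (((S ∩ T).card : ℝ) - μ) - δ ^ 2 * M / 2)]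
      · have : 1 ≤ Real.exp (-(δ / 2) * (((S ∩ T).card : ℝ) - μ) - δ ^ 2 * M / 2) := by
          rw [Real.one_le_exp_iff]
          nlinarith [mul_le_mul_of_nonneg_left h.le hδ0]
        linarith [Real.exp_pos ((δ / 2) * (((S ∩ T).card : ℝ) - μ) - δ ^ 2 * M / 2)]
    · positivity
  rw [sum_add_distrib] at this
  linarith

open Finset Classical in
lemma wt_union {ι V : Type*} [Fintype ι] [DecidableEq ι] [Fintype V] (p : ι → ℝ)
    (h0 : ∀ i, 0 ≤ p i)
    (h1 : ∀ i, p i ≤ 1) (T : V → Finset ι) (M : V → ℝ) (δ η : ℝ) (hδ0 : 0 ≤ δ) (hδ : δ ≤ 1)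
    (hM : ∀ v, ∑ i ∈ T v, p i ≤ M v) (hη : ∀ v, 2 * Real.exp (-(δ ^ 2 * M v / 4)) ≤ η) :
    1 - Fintype.card V * η ≤
    ∑ S, {S | ∀ v, |((S ∩ T v).card : ℝ) - ∑ i ∈ T v, p i| ≤ δ * M v}.indicator (wt p) S := by
  have hconv : ∑ S, {S | ∀ v, |((S ∩ T v).card : ℝ) - ∑ i ∈ T v, p i| ≤ δ * M v}.indicator (wt p) S
      = ∑ S with ∀ v, |((S ∩ T v).card : ℝ) - ∑ i ∈ T v, p i| ≤ δ * M v, wt p S := by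
    rw [sum_filter]
    refine sum_congr rfl fun S _ => ?_
    simp only [Set.indicator_apply, Set.mem_ofPred_eq]
  rw [hconv]
  have hs := wt_sum p
  rw [← sum_filter_add_sum_filter_not univ
    (fun S => ∀ v, |((S ∩ T v).card : ℝ) - ∑ i ∈ T v, p i| ≤ δ * M v)] at hs
  have : ∑ S with ¬ ∀ v, |((S ∩ T v).card : ℝ) - ∑ i ∈ T v, p i| ≤ δ * M v, wt p S
      ≤ ∑ v : V, ∑ S with δ * M v < |((S ∩ T v).card : ℝ) - ∑ i ∈ T v, p i|, wt p S := by
    simp_rw [sum_filter]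
    rw [sum_comm]
    refine sum_le_sum fun S _ => ?_
    have hw := wt_nonneg p h0 h1 S
    have hn : ∀ v ∈ (univ : Finset V),
      0 ≤ if δ * M v < |((S ∩ T v).card : ℝ) - ∑ i ∈ T v, p i| then wt p S else 0 := by
      intro v _; split_ifs <;> simp [hw]
    by_cases h : ∀ v, |((S ∩ T v).card : ℝ) - ∑ i ∈ T v, p i| ≤ δ * M v
    · rw [if_neg (not_not.2 h)]
      exact sum_nonneg hn
    · rw [if_pos h]
      push Not at h
      obtain ⟨v, hv⟩ := h
      refine le_trans ?_ (single_le_sum hn (mem_univ v))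
      rw [if_pos hv]
  have h2 : ∑ v : V, ∑ S with δ * M v < |((S ∩ T v).card : ℝ) - ∑ i ∈ T v, p i|, wt p S
      ≤ ∑ v : V, η :=
    sum_le_sum fun v _ => (wt_tail p h0 h1 (T v) (M v) δ hδ0 hδ (hM v)).trans (hη v)
  simp only [sum_const, card_univ, nsmul_eq_mul] at h2
  linarith

lemma bern_eq (N : ℕ) (ε : ℝ) (E : Set (Finset (Fin N))) :
    bernoulliProb N (1 - ε) E = ∑ S, Eᶜᶜ.indicator (fun A => wt (fun _ => ε) Aᶜ) S := by
  rw [bernoulliProb, compl_compl]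
  refine Finset.sum_congr rfl fun S _ => ?_
  congr 1
  funext A
  simp only [wt, Finset.prod_const, ← Finset.compl_eq_univ_sdiff, compl_compl, Finset.card_compl,
    Fintype.card_fin, sub_sub_cancel]
  ring

open Finset Classical in
lemma bern_ge (N : ℕ) (ε : ℝ) (h0 : 0 ≤ ε) (h1 : ε ≤ 1) (E : Set (Finset (Fin N)))
    (P : Finset (Fin N) → Prop) (hP : ∀ B, P B → Bᶜ ∈ E) :
    ∑ S, {S | P S}.indicator (wt (fun _ => ε)) S ≤ bernoulliProb N (1 - ε) E := by
  rw [bern_eq, compl_compl,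
    ← Equiv.sum_comp (Function.Involutive.toPerm (compl : Finset (Fin N) → _) compl_involutive)]
  refine sum_le_sum fun S _ => ?_
  have hw := wt_nonneg (fun _ : Fin N => ε) (fun _ => h0) (fun _ => h1) 
  simp only [Function.Involutive.coe_toPerm]
  by_cases hS : P Sᶜ
  · have := hP _ hS
    rw [compl_compl] at this
    rw [Set.indicator_of_mem (by exact hS), Set.indicator_of_mem this]
  · rw [Set.indicator_of_notMem (by exact hS)]
    exact Set.indicator_nonneg (fun A _ => hw _) _

lemma num_bound (n : ℕ) (hn : 2 ≤ n) (M : ℝ) (hM : 10 ^ 4 * Real.logb 2 n ≤ M) :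
    2 * Real.exp (-((1/20) ^ 2 * M / 4)) ≤ 1 / (n : ℝ) ^ 3 := by
  have hn' : (2 : ℝ) ≤ n := by exact_mod_cast hn
  have hl : 0 ≤ Real.log n := Real.log_nonneg (by linarith)
  have hl2 : Real.log n ≤ Real.logb 2 n := by
    rw [Real.logb, le_div_iff₀ (Real.log_pos (by norm_num))]
    nlinarith [Real.log_two_lt_d9]
  have h1 : Real.exp (-((1/20) ^ 2 * M / 4)) ≤ Real.exp (-(4 * Real.log n)) := by
    rw [Real.exp_le_exp]; linarith
  have h2 : Real.exp (-(4 * Real.log n)) = 1 / (n : ℝ) ^ 4 := by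
    rw [Real.exp_neg, show (4 : ℝ) * Real.log n = ((4 : ℕ) : ℝ) * Real.log n by norm_num,
      Real.exp_nat_mul, Real.exp_log (by linarith), one_div]
  rw [h2] at h1
  refine (mul_le_mul_of_nonneg_left h1 (by norm_num)).trans ?_
  rw [mul_one_div, div_le_div_iff₀ (by positivity) (by positivity)]
  nlinarith [pow_pos (show (0 : ℝ) < n by linarith) 3]

/-- arithmetic, low case -/
lemma arith_low (ε γ d k f b t l h : ℝ) (hε0 : 0 < ε) (hε : ε ≤ 1 / 100)
    (hγ : 10 * ε ≤ γ) (hd : 0 < d) (hk : d ≤ k) (hk2 : k < (1 + γ) * (1 - 2 * ε) * d)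
    (hlh : l + h = k) (htl : t ≤ l) (hf0 : 0 ≤ f) (hb0 : 0 ≤ b)
    (hf : |f - ε * h| ≤ 1 / 20 * (2 * ε * k)) (hb : |b - ε * t| ≤ 1 / 20 * (ε * k)) :
    (1 - 6 / 5 * ε) * d ≤ k - f - b ∧
      k - f - b ≤ (1 - ε / 2) * (1 + γ) * ((1 - 6 / 5 * ε) * d) := by
  have hf2 := (abs_le.1 hf).2
  have hb2 := (abs_le.1 hb).2
  have e1 : ε * t ≤ ε * l := mul_le_mul_of_nonneg_left htl hε0.le
  subst hlh
  constructor
  · have : (1 - 23 / 20 * ε) * d ≤ (1 - 23 / 20 * ε) * (l + h) :=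
      mul_le_mul_of_nonneg_left hk (by linarith)
    have := mul_pos hε0 hd
    linarith
  · have hp : 0 < (1 + γ) * d := mul_pos (by linarith) hd
    have : (1 - 2 * ε) * ((1 + γ) * d) ≤ ((1 - ε / 2) * (1 - 6 / 5 * ε)) * ((1 + γ) * d) :=
      mul_le_mul_of_nonneg_right (by nlinarith) hp.le
    linarith

/-- arithmetic, high case -/
lemma arith_high (ε γ d k f b t l h : ℝ) (hε0 : 0 < ε) (hε : ε ≤ 1 / 100)
    (hγ : 10 * ε ≤ γ) (hd : 0 < d) (hk : (1 + γ) * (1 - 2 * ε) * d ≤ k) (hk2 : k ≤ (1 + γ) * d)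
    (hlh : l + h = k) (hh : 0 ≤ h) (hl : 0 ≤ l) (htl : t ≤ l) (htl2 : l - f ≤ t)
    (hf : |f - (ε * k + ε * h)| ≤ 1 / 20 * (2 * ε * k)) (hb : |b - ε * t| ≤ 1 / 20 * (ε * k)) :
    (1 - 6 / 5 * ε) * d ≤ k - f - b ∧
      k - f - b ≤ (1 - ε / 2) * (1 + γ) * ((1 - 6 / 5 * ε) * d) := by
  obtain ⟨hf1, hf2⟩ := abs_le.1 hf
  obtain ⟨hb1, hb2⟩ := abs_le.1 hb
  have e1 : ε * t ≤ ε * l := mul_le_mul_of_nonneg_left htl hε0.le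
  have e2 : ε * (l - f) ≤ ε * t := mul_le_mul_of_nonneg_left htl2 hε0.le
  have hp : 0 < (1 + γ) * d := mul_pos (by linarith) hd
  have hk0 : 0 < k := lt_of_lt_of_le (by
    have := mul_pos hp (show 0 < 1 - 2 * ε by linarith); linarith) hk
  have hl' : l = k - h := by linarith
  subst hl'
  constructor
  · have h1 : k * (1 - 23 / 10 * ε) ≤ k - f - b := by
      have : 0 < ε * k := mul_pos hε0 hk0
      nlinarith
    have h2 : ((1 + γ) * (1 - 2 * ε) * d) * (1 - 23 / 10 * ε) ≤ k * (1 - 23 / 10 * ε) :=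
      mul_le_mul_of_nonneg_right hk (by linarith)
    have h3 : (1 - 6 / 5 * ε) ≤ (1 + γ) * ((1 - 2 * ε) * (1 - 23 / 10 * ε)) := by
      have : (1 + 10 * ε) * ((1 - 2 * ε) * (1 - 23 / 10 * ε)) ≤
          (1 + γ) * ((1 - 2 * ε) * (1 - 23 / 10 * ε)) :=
        mul_le_mul_of_nonneg_right (by linarith) (mul_nonneg (by linarith) (by linarith))
      have : 0 < ε ^ 3 := by positivity
      nlinarith
    have := mul_le_mul_of_nonneg_right h3 hd.le
    linarith
  · have hek : 0 < ε * k := mul_pos hε0 hk0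
    have hfk : f ≤ 22 / 1000 * k := by
      have : ε * h ≤ ε * k := mul_le_mul_of_nonneg_left (by linarith) hε0.le
      have : ε * k ≤ 1 / 100 * k := mul_le_mul_of_nonneg_right hε hk0.le
      linarith
    have := mul_le_mul_of_nonneg_left hfk hε0.le
    have h1 : k - f - b ≤ (1 - 9 / 5 * ε) * k := by linarith
    have h2 : (1 - 9 / 5 * ε) * k ≤ (1 - 9 / 5 * ε) * ((1 + γ) * d) :=
      mul_le_mul_of_nonneg_left hk2 (by linarith)
    have : (1 - 9 / 5 * ε) * ((1 + γ) * d) ≤ ((1 - ε / 2) * (1 - 6 / 5 * ε)) * ((1 + γ) * d) :=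
      mul_le_mul_of_nonneg_right (by nlinarith) hp.le
    linarith

lemma card_split {α : Type*} (K : Finset α) (P Q R : α → Prop) [DecidablePred P]
    [DecidablePred (fun u => ¬ P u ∧ Q u)] [DecidablePred (fun u => ¬ P u ∧ R u)]
    (h : ∀ u, R u ↔ ¬ Q u) :
    (K.filter (fun u => ¬ P u ∧ Q u)).card + (K.filter P).card +
      (K.filter (fun u => ¬ P u ∧ R u)).card = K.card := by
  classical
  induction K using Finset.induction_on with
  | empty => simp
  | insert a s ha ih =>
    rw [Finset.card_insert_of_notMem ha, ← ih]
    have := h a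
    by_cases hp : P a <;> by_cases hq : Q a <;>
      simp [Finset.filter_insert, hp, hq, this, ha] <;> omega

open Classical in
theorem main_aux (ε γ : ℝ) (hε0 : 0 < ε) (hε : ε ≤ 1 / 100)
    (hγ : 10 * ε ≤ γ) (n N : ℕ) (hn : 2 ≤ n) (hN : N ≤ n) (d : ℝ)
    (hd : 10 ^ 4 * Real.logb 2 n ≤ ε * d)
    (G : SimpleGraph (Fin N))
    (hdeg : ∀ v, d ≤ ((G.neighborSet v).ncard : ℝ) ∧
      ((G.neighborSet v).ncard : ℝ) ≤ (1 + γ) * d) :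
    1 - 1 / (n : ℝ) ^ 2 ≤ bernoulliProb N (1 - ε)
      {A : Finset (Fin N) | ∃ (G' : G.Subgraph) (d' : ℝ),
        (↑A : Set (Fin N)) ⊆ G'.verts ∧
        (1 - 2 * ε) * d ≤ d' ∧ d' ≤ d ∧
        ∀ v ∈ G'.verts, d' ≤ ((G'.neighborSet v).ncard : ℝ) ∧
          ((G'.neighborSet v).ncard : ℝ) ≤ (1 - ε / 2) * (1 + γ) * d'} := by
  have hn' : (2 : ℝ) ≤ n := by exact_mod_cast hn
  have hNn : (N : ℝ) ≤ n := by exact_mod_cast hN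
  have hlog : 0 < Real.logb 2 n := Real.logb_pos (by norm_num) (by linarith)
  have hd0 : 0 < d := by
    have : 0 < ε * d := by linarith
    exact (mul_pos_iff_of_pos_left hε0).1 this
  -- neighbourhoods
  set K : Fin N → Finset (Fin N) := fun v => Finset.univ.filter (G.Adj v) with hK
  have hKdeg : ∀ v, (G.neighborSet v).ncard = (K v).card := by
    intro v
    rw [← Set.ncard_coe_finset]
    congr 1
    ext u
    simp [hK]
  simp only [hKdeg] at hdeg
  set high : Fin N → Prop := fun v => (1 + γ) * (1 - 2 * ε) * d ≤ ((K v).card : ℝ) with hhigh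
  set hw : Fin N → ℝ := fun v => if high v then ε else 0 with hhw
  have hw0 : ∀ v, 0 ≤ hw v := fun v => by simp only [hhw]; split_ifs <;> linarith
  have hw1 : ∀ v, hw v ≤ ε := fun v => by simp only [hhw]; split_ifs <;> linarith
  set p : Sym2 (Fin N) → ℝ := fun e =>
    Sym2.lift ⟨fun a b => hw a + hw b, fun a b => add_comm _ _⟩ e with hp
  have hp_mk : ∀ a b, p s(a, b) = hw a + hw b := fun a b => rfl
  have hp0 : ∀ e, 0 ≤ p e := by
    intro e; induction e with | _ a b => rw [hp_mk]; linarith [hw0 a, hw0 b]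
  have hp1 : ∀ e, p e ≤ 1 := by
    intro e; induction e with | _ a b => rw [hp_mk]; linarith [hw1 a, hw1 b]
  have hinj : ∀ v : Fin N, Function.Injective (fun u => s(v, u)) := by
    intro v a b h
    exact Sym2.congr_right.1 h
  set TE : Fin N → Finset (Sym2 (Fin N)) := fun v => (K v).image (fun u => s(v, u)) with hTE
  have hmean : ∀ v, ∑ e ∈ TE v, p e = hw v * (K v).card + ε * ((K v).filter high).card := by
    intro v
    rw [hTE, Finset.sum_image (fun a _ b _ h => hinj v h)]
    simp only [hp_mk, Finset.sum_add_distrib, Finset.sum_const, nsmul_eq_mul]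
    congr 1
    · ring
    · simp only [hhw]
      rw [← Finset.sum_filter, Finset.sum_const, nsmul_eq_mul, mul_comm]
  have hfl : ∀ v, (((K v).filter high).card : ℝ) ≤ (K v).card := fun v => by
    exact_mod_cast Finset.card_filter_le _ _
  have hMk : ∀ v, ε * d ≤ ε * (K v).card := fun v =>
    mul_le_mul_of_nonneg_left (hdeg v).1 hε0.le
  have hnum := num_bound n hn
  have hbd : (Fintype.card (Fin N) : ℝ) * (1 / (n : ℝ) ^ 3) ≤ 1 / (n : ℝ) ^ 2 := by
    rw [Fintype.card_fin, mul_one_div, div_le_div_iff₀ (by positivity) (by positivity)]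
    have : (N : ℝ) * (n : ℝ) ^ 2 ≤ n * (n : ℝ) ^ 2 :=
      mul_le_mul_of_nonneg_right hNn (by positivity)
    linarith
  -- choose F
  obtain ⟨F, hF⟩ : ∃ F : Finset (Sym2 (Fin N)), ∀ v,
      |((F ∩ TE v).card : ℝ) - ∑ e ∈ TE v, p e| ≤ 1 / 20 * (2 * ε * (K v).card) := by
    have := wt_union p hp0 hp1 TE (fun v => 2 * ε * (K v).card) (1 / 20) (1 / (n : ℝ) ^ 3)
      (by norm_num) (by norm_num) (by
        intro v
        rw [hmean]
        have h1 := mul_le_mul_of_nonneg_right (hw1 v) (Nat.cast_nonneg (α := ℝ) (K v).card)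
        have h2 := mul_le_mul_of_nonneg_left (hfl v) hε0.le
        linarith) (by
        intro v
        apply hnum
        have : 0 ≤ ε * d := by positivity
        linarith [hMk v])
    by_contra! hcon
    rw [Finset.sum_eq_zero] at this
    · have : 1 / (n : ℝ) ^ 2 < 1 := by
        rw [div_lt_one (by positivity)]; nlinarith
      linarith
    · intro S _
      refine Set.indicator_of_notMem (fun h => ?_) _
      obtain ⟨v, hv⟩ := hcon S
      exact absurd (h v) (not_le.2 hv)
  -- vertex sets
  set TV : Fin N → Finset (Fin N) := fun v =>
    (K v).filter (fun u => s(v, u) ∉ F ∧ ¬ high u) with hTV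
  have hTVk : ∀ v, ((TV v).card : ℝ) ≤ (K v).card := fun v => by
    exact_mod_cast Finset.card_filter_le _ _
  have hB := wt_union (fun _ : Fin N => ε) (fun _ => hε0.le) (fun _ => by linarith) TV
    (fun v => ε * (K v).card) (1 / 20) (1 / (n : ℝ) ^ 3)
      (by norm_num) (by norm_num) (by
        intro v
        rw [Finset.sum_const, nsmul_eq_mul, mul_comm]
        exact mul_le_mul_of_nonneg_left (hTVk v) hε0.le) (by
        intro v
        apply hnum
        linarith [hMk v])
  refine le_trans (by linarith) (hB.trans (bern_ge N ε hε0.le (by linarith) _ _ ?_))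
  intro B hBv
  have hεd : 0 < ε * d := mul_pos hε0 hd0
  refine ⟨{ verts := {v | v ∉ B ∨ high v}
            Adj := fun u v => G.Adj u v ∧ s(u, v) ∉ F ∧ (u ∉ B ∨ high u) ∧ (v ∉ B ∨ high v)
            adj_sub := fun h => h.1
            edge_vert := fun h => h.2.2.1
            symm := ⟨fun u v h => ⟨h.1.symm, by rw [Sym2.eq_swap]; exact h.2.1, h.2.2.2, h.2.2.1⟩⟩ },
    (1 - 6 / 5 * ε) * d, ?_, by linarith, by linarith, ?_⟩
  · intro v hv
    left
    simpa using hv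
  intro v hv
  have hv' : v ∉ B ∨ high v := hv
  set X := (K v).filter (fun u => s(v, u) ∉ F ∧ (u ∉ B ∨ high u)) with hX
  rw [show (SimpleGraph.Subgraph.neighborSet _ v) = (X : Set (Fin N)) by
    ext u
    simp [hX, hK, SimpleGraph.Subgraph.mem_neighborSet, hv'], Set.ncard_coe_finset]
  have hFc : (F ∩ TE v).card = ((K v).filter (fun u => s(v, u) ∈ F)).card := by
    rw [← Finset.card_image_of_injective _ (hinj v)]
    congr 1
    ext e
    simp only [hTE, Finset.mem_inter, Finset.mem_image, Finset.mem_filter]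
    constructor
    · rintro ⟨h1, u, h2, rfl⟩
      exact ⟨u, ⟨h2, h1⟩, rfl⟩
    · rintro ⟨u, ⟨h1, h2⟩, rfl⟩
      exact ⟨h2, u, h1, rfl⟩
  have hBc : B ∩ TV v = (K v).filter (fun u => s(v, u) ∉ F ∧ ¬ high u ∧ u ∈ B) := by
    ext u
    simp only [hTV, Finset.mem_inter, Finset.mem_filter]
    tauto
  have hFv := hF v
  have hBv' := hBv v
  rw [hmean, hFc] at hFv
  rw [Finset.sum_const, nsmul_eq_mul, mul_comm _ ε] at hBv'
  have hcard : X.card + ((K v).filter (fun u => s(v, u) ∈ F)).card + (B ∩ TV v).card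
      = (K v).card := by
    rw [hBc, hX]
    exact card_split (K v) (fun u => s(v, u) ∈ F) (fun u => u ∉ B ∨ high u)
      (fun u => ¬ high u ∧ u ∈ B) (fun u => by tauto)
  have hlh : ((K v).filter (fun u => ¬ high u)).card + ((K v).filter high).card = (K v).card := by
    rw [add_comm]
    exact Finset.card_filter_add_card_filter_not _
  have htl : (TV v).card ≤ ((K v).filter (fun u => ¬ high u)).card :=
    Finset.card_le_card (fun u hu => by
      simp only [hTV, Finset.mem_filter] at hu ⊢; tauto)
  have htl2 : ((K v).filter (fun u => ¬ high u)).card ≤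
      (TV v).card + ((K v).filter (fun u => s(v, u) ∈ F)).card :=
    (Finset.card_le_card (fun u hu => by
      simp only [hTV, Finset.mem_filter, Finset.mem_union] at hu ⊢; tauto)).trans
      (Finset.card_union_le _ _)
  have hcard' : (X.card : ℝ) = (K v).card - ((K v).filter (fun u => s(v, u) ∈ F)).card
      - (B ∩ TV v).card := by
    rw [← hcard]; push_cast; ring
  have htl2' : (((K v).filter (fun u => ¬ high u)).card : ℝ) ≤
      (TV v).card + ((K v).filter (fun u => s(v, u) ∈ F)).card := by exact_mod_cast htl2
  rw [hcard']
  by_cases hh : high v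
  · rw [show hw v = ε by simp [hhw, hh]] at hFv
    exact arith_high ε γ d _ _ _ (TV v).card (((K v).filter (fun u => ¬ high u)).card : ℝ) _ hε0 hε hγ hd0 hh (hdeg v).2
      (by exact_mod_cast hlh) (Nat.cast_nonneg _) (Nat.cast_nonneg _) (by exact_mod_cast htl)
      (by linarith) hFv hBv'
  · rw [show hw v = 0 by simp [hhw, hh], zero_mul, zero_add] at hFv
    exact arith_low ε γ d _ _ _ (TV v).card (((K v).filter (fun u => ¬ high u)).card : ℝ) _ hε0 hε hγ hd0 (hdeg v).1 (not_le.1 hh)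
      (by exact_mod_cast hlh) (by exact_mod_cast htl) (Nat.cast_nonneg _) (Nat.cast_nonneg _)
      hFv hBv'

theorem statement7 (ε γ : ℝ) (hε0 : 0 < ε) (hε : ε ≤ 1 / 100) (hγ0 : 0 < γ)
    (hγ : 10 * ε ≤ γ) (n N : ℕ) (hN : N ≤ n) (d : ℝ)
    (hd : 10 ^ 4 * Real.logb 2 n ≤ ε * d)
    (G : SimpleGraph (Fin N))
    (hdeg : ∀ v, d ≤ ((G.neighborSet v).ncard : ℝ) ∧
      ((G.neighborSet v).ncard : ℝ) ≤ (1 + γ) * d) :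
    1 - 1 / (n : ℝ) ^ 2 ≤ bernoulliProb N (1 - ε)
      {A : Finset (Fin N) | ∃ (G' : G.Subgraph) (d' : ℝ),
        (↑A : Set (Fin N)) ⊆ G'.verts ∧
        (1 - 2 * ε) * d ≤ d' ∧ d' ≤ d ∧
        ∀ v ∈ G'.verts, d' ≤ ((G'.neighborSet v).ncard : ℝ) ∧
          ((G'.neighborSet v).ncard : ℝ) ≤ (1 - ε / 2) * (1 + γ) * d'} := by
  rcases Nat.lt_or_ge n 2 with hn | hn
  · interval_cases n
    · obtain rfl : N = 0 := by omega
      have hd0 : 0 ≤ d := by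
        simp at hd
        exact nonneg_of_mul_nonneg_right hd hε0
      simp only [bernoulliProb, Finset.univ_unique, Finset.sum_singleton]
      rw [Set.indicator_of_mem]
      · rw [show (default : Finset (Fin 0)) = ∅ from rfl]
        simp
      · refine ⟨⊤, d, by simp, ?_, le_rfl, fun v => v.elim0⟩
        have := mul_nonneg hε0.le hd0
        linarith
    · simp only [Nat.cast_one, one_pow, div_one, sub_self]
      refine Finset.sum_nonneg fun S _ => Set.indicator_nonneg (fun A _ => ?_) _
      have : 0 ≤ 1 - ε := by linarith
      have : 0 ≤ 1 - (1 - ε) := by linarith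
      positivity
  · exact main_aux ε γ hε0 hε hγ n N hn hN d hd G hdeg
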